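/- Conditional distribution of a dithered quantizer output: let X be a random vector in ℝ^k with density f_X, let P₀ ⊂ ℝ^k be a bounded measurable set of positive volume V, let N be uniformly distributed over −P₀ and independent of X, and set X̂ = X + N. Then for any disjoint index sets I, J ⊆ {1,…,k}: (i) the marginal density of X̂_J is f_{X̂_J}(x̂_J) = (1/V) ∫_{P₀} f_{X_J}(x̂_J + τ_J) dτ, and (ii) whenever ∫_{P₀} f_{X_J}(x̂_J + τ_J) dτ ≠ 0, the conditional cumulative distribution function satisfies F_{X̂_I|X̂_J}(x̂_I | x̂_J) = [ ∫_{P₀} F_{X_I|X_J}(x̂_I + τ_I | x̂_J + τ_J) f_{X_J}(x̂_J + τ_J) dτ ] / [ ∫_{P₀} f_{X_J}(x̂_J + τ_J) dτ ]. -/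

import Mathlib

open MeasureTheory ProbabilityTheory Real
open scoped ENNReal NNReal Classical

/-- Combine values on coordinates in `J` (taken from `x`) with values outside `J`
(taken from `y`) into a full vector in `ℝ^k`. -/
def glue {k : ℕ} (J : Finset (Fin k)) (x : Fin k → ℝ) (y : {i : Fin k // i ∉ J} → ℝ) :
    Fin k → ℝ :=
  fun i => if h : i ∈ J then x i else y ⟨i, h⟩

/-- Marginal density of the subvector indexed by `J`, obtained from a joint density `f` on
`ℝ^k` by integrating out the coordinates outside `J`.  It is written as a function of a full
vector in `ℝ^k`, but depends only on the coordinates in `J`. -/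
noncomputable def margDen {k : ℕ} (f : (Fin k → ℝ) → ℝ) (J : Finset (Fin k))
    (x : Fin k → ℝ) : ℝ :=
  ∫ y : {i : Fin k // i ∉ J} → ℝ, f (glue J x y)

/-- Numerator of the conditional c.d.f. of the subvector indexed by `I` given the subvector
indexed by `J`, for a joint density `f` on `ℝ^k`: the coordinates in `I` are integrated up to
the corresponding values of `x`, the coordinates in `J` are fixed at the values of `x`, and all
remaining coordinates are integrated out. -/
noncomputable def condCDFNum {k : ℕ} (f : (Fin k → ℝ) → ℝ) (I J : Finset (Fin k))
    (x : Fin k → ℝ) : ℝ :=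
  ∫ y : {i : Fin k // i ∉ J} → ℝ,
    if ∀ i : {i : Fin k // i ∉ J}, i.1 ∈ I → y i ≤ x i.1 then f (glue J x y) else 0

/-- Conditional c.d.f. `F_{X_I | X_J}` derived from a joint density `f` on `ℝ^k`, written as a
function of a full vector (argument coordinates in `I` are the evaluation point of the c.d.f.,
coordinates in `J` are the conditioning values). -/
noncomputable def condCDFd {k : ℕ} (f : (Fin k → ℝ) → ℝ) (I J : Finset (Fin k))
    (x : Fin k → ℝ) : ℝ :=
  condCDFNum f I J x / margDen f J x

/-!
Write `ν` for the law of `-N`. The law of `X + N` has density `x ↦ ∫ f (x + τ) ∂ν`, and integrating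
out coordinates commutes with both translation and, by Fubini, the average over `ν`. This gives the
marginal density of `X + N`, and the same exchange applies to the numerator of the conditional
c.d.f., because translating the evaluation point along with the density preserves the domain of
integration. Finally `F_{X_I | X_J} * f_{X_J}` is the numerator of the conditional c.d.f. of `X`,
also where `f_{X_J}` vanishes, since `f` is then zero almost everywhere on the fibre.

Convergence is the delicate point, as `f_{X_J}` may be infinite on a null set. For the marginal
density, `ℝ≥0∞`-valued integrals suffice, since their total mass is finite. For the conditional
c.d.f. at a given point, a nonzero value of the Bochner integral `∫ f_{X_J} (x + τ) ∂ν` forces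
integrability, and `f_{X_J} (x + τ)` is finite for `ν`-almost every `τ` because `ν ≪ volume`.
-/

lemma lintegral_ne_top_of_eq_withDensity {α : Type*} [MeasurableSpace α] {ρ μ : Measure α}
    [IsFiniteMeasure ρ] {g : α → ℝ≥0∞} (hρ : ρ = μ.withDensity g) : ∫⁻ x, g x ∂μ ≠ ∞ := by
  rw [← setLIntegral_univ, ← withDensity_apply _ MeasurableSet.univ, ← hρ]
  exact measure_ne_top _ _

lemma map_neg_restrict {G : Type*} [AddGroup G] [MeasurableSpace G] [MeasurableNeg G]
    (μ : Measure G) [μ.IsNegInvariant] (s : Set G) :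
    (μ.restrict s).map Neg.neg = μ.restrict (-s) := by
  have h := measurableEmbedding_neg.restrict_map μ (-s)
  rw [μ.map_neg_eq_self] at h
  simpa using h.symm

lemma withDensity_conv_map_neg {G : Type*} [AddGroup G] [MeasurableSpace G] [MeasurableAdd₂ G]
    [MeasurableNeg G] {μ ν : Measure G} [SFinite μ] [SFinite ν] [μ.IsAddRightInvariant]
    {g : G → ℝ≥0∞} (hg : Measurable g) :
    (μ.withDensity g).conv (ν.map Neg.neg) = μ.withDensity fun x => ∫⁻ τ, g (x + τ) ∂ν := by
  have hgadd : Measurable fun p : G × G => g (p.1 + p.2) := hg.comp measurable_add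
  refine Measure.ext_of_lintegral _ fun φ hφ => ?_
  have hφsub : Measurable fun p : G × G => φ (p.1 + -p.2) :=
    hφ.comp (measurable_fst.add measurable_snd.neg)
  calc ∫⁻ z, φ z ∂(μ.withDensity g).conv (ν.map Neg.neg)
      = ∫⁻ x, ∫⁻ τ, φ (x + -τ) ∂ν ∂μ.withDensity g := by
        rw [Measure.lintegral_conv hφ]
        exact lintegral_congr fun x =>
          lintegral_map (hφ.comp (measurable_const_add x)) measurable_neg
    _ = ∫⁻ x, ∫⁻ τ, g x * φ (x + -τ) ∂ν ∂μ := by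
        rw [lintegral_withDensity_eq_lintegral_mul _ hg hφsub.lintegral_prod_right']
        exact lintegral_congr fun x =>
          (lintegral_const_mul _ (hφsub.comp measurable_prodMk_left)).symm
    _ = ∫⁻ τ, ∫⁻ x, g x * φ (x + -τ) ∂μ ∂ν :=
        lintegral_lintegral_swap ((hg.comp measurable_fst).mul hφsub).aemeasurable
    _ = ∫⁻ τ, ∫⁻ x, g (x + τ) * φ x ∂μ ∂ν := by
        refine lintegral_congr fun τ => ?_
        rw [← lintegral_add_right_eq_self _ τ]
        simp only [add_neg_cancel_right]
    _ = ∫⁻ x, ∫⁻ τ, g (x + τ) * φ x ∂ν ∂μ :=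
        (lintegral_lintegral_swap (hgadd.mul (hφ.comp measurable_fst)).aemeasurable).symm
    _ = ∫⁻ x, (∫⁻ τ, g (x + τ) ∂ν) * φ x ∂μ :=
        lintegral_congr fun x => lintegral_mul_const _ (hgadd.comp measurable_prodMk_left)
    _ = ∫⁻ x, φ x ∂μ.withDensity fun x => ∫⁻ τ, g (x + τ) ∂ν :=
        (lintegral_withDensity_eq_lintegral_mul _ hgadd.lintegral_prod_right' hφ).symm

section Glue

variable {k : ℕ} {J : Finset (Fin k)}

lemma glue_add (x τ : Fin k → ℝ) (y : {i : Fin k // i ∉ J} → ℝ) :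
    glue J x y + τ = glue J (x + τ) (y + fun i => τ i.1) := by
  ext i
  by_cases hi : i ∈ J <;> simp [glue, hi]

lemma measurable_glue :
    Measurable fun p : (Fin k → ℝ) × ({i : Fin k // i ∉ J} → ℝ) => glue J p.1 p.2 := by
  refine measurable_pi_lambda _ fun i => ?_
  by_cases hi : i ∈ J <;> simp only [glue, hi, dite_true, dite_false] <;> fun_prop

lemma measurable_glue_add (x : Fin k → ℝ) :
    Measurable fun p : ({i : Fin k // i ∉ J} → ℝ) × (Fin k → ℝ) => glue J x p.1 + p.2 :=
  (measurable_glue.comp (measurable_const.prodMk measurable_fst)).add measurable_snd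

/-- The vector of `ℝ^k` with coordinates `u` on `J` and `0` elsewhere. It turns a subvector into an
argument for `glue`, `margDen` and `condCDFd`, which read the `J`-coordinates off a full vector. -/
noncomputable def zeroExtend (J : Finset (Fin k)) (u : J → ℝ) : Fin k → ℝ :=
  fun i => if h : i ∈ J then u ⟨i, h⟩ else 0

lemma measurable_zeroExtend : Measurable (zeroExtend J) := by
  refine measurable_pi_lambda _ fun i => ?_
  by_cases hi : i ∈ J <;> simp only [zeroExtend, hi, dite_true, dite_false] <;> fun_prop

lemma glue_zeroExtend_restrict (x : Fin k → ℝ) (y : {i : Fin k // i ∉ J} → ℝ) :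
    glue J (zeroExtend J (J.restrict x)) y = glue J x y := by
  ext i
  by_cases hi : i ∈ J <;> simp [glue, zeroExtend, hi]

lemma restrict_glue_zeroExtend (u : J → ℝ) (y : {i : Fin k // i ∉ J} → ℝ) :
    J.restrict (glue J (zeroExtend J u) y) = u := by
  ext i
  simp [glue, zeroExtend]

lemma measurePreserving_glue_zeroExtend (J : Finset (Fin k)) :
    MeasurePreserving fun p : (J → ℝ) × ({i : Fin k // i ∉ J} → ℝ) =>
      glue J (zeroExtend J p.1) p.2 := by
  convert (volume_preserving_piEquivPiSubtypeProd (fun _ : Fin k => ℝ) (· ∈ J)).symm using 1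
  · ext p i
    by_cases hi : i ∈ J <;>
      simp [glue, zeroExtend, hi, MeasurableEquiv.piEquivPiSubtypeProd, Equiv.piEquivPiSubtypeProd]
  · simp only [Measure.volume_eq_prod]
    congr!

end Glue

section MarginalDensity

variable {k : ℕ} {J : Finset (Fin k)}

/-- The `ℝ≥0∞`-valued counterpart of `margDen`: the lower Lebesgue integral of `g` over the
coordinates outside `J`. Unlike `margDen` it takes the value `∞`, rather than the junk value `0`,
where `g` has a divergent section. -/
noncomputable def lmargDen (g : (Fin k → ℝ) → ℝ≥0∞) (J : Finset (Fin k)) (x : Fin k → ℝ) : ℝ≥0∞ :=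
  ∫⁻ y : {i : Fin k // i ∉ J} → ℝ, g (glue J x y)

variable {g : (Fin k → ℝ) → ℝ≥0∞}

lemma measurable_lmargDen (hg : Measurable g) : Measurable (lmargDen g J) :=
  (hg.comp measurable_glue).lintegral_prod_right'

lemma lmargDen_zeroExtend_restrict (x : Fin k → ℝ) :
    lmargDen g J (zeroExtend J (J.restrict x)) = lmargDen g J x := by
  simp only [lmargDen, glue_zeroExtend_restrict]

lemma lmargDen_comp_add (x τ : Fin k → ℝ) :
    lmargDen (fun z => g (z + τ)) J x = lmargDen g J (x + τ) := by
  simp only [lmargDen, glue_add]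
  exact lintegral_add_right_eq_self (fun y => g (glue J (x + τ) y)) _

lemma lmargDen_lintegral_add (hg : Measurable g) (ν : Measure (Fin k → ℝ)) [SFinite ν]
    (x : Fin k → ℝ) :
    lmargDen (fun z => ∫⁻ τ, g (z + τ) ∂ν) J x = ∫⁻ τ, lmargDen g J (x + τ) ∂ν := by
  calc lmargDen (fun z => ∫⁻ τ, g (z + τ) ∂ν) J x
      = ∫⁻ τ, lmargDen (fun z => g (z + τ)) J x ∂ν :=
        lintegral_lintegral_swap (hg.comp (measurable_glue_add x)).aemeasurable
    _ = ∫⁻ τ, lmargDen g J (x + τ) ∂ν := by simp only [lmargDen_comp_add]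

lemma map_restrict_withDensity (hg : Measurable g) :
    (volume.withDensity g).map J.restrict =
      volume.withDensity fun u => lmargDen g J (zeroExtend J u) := by
  have hg' : Measurable fun p : (J → ℝ) × ({i : Fin k // i ∉ J} → ℝ) =>
      g (glue J (zeroExtend J p.1) p.2) := hg.comp (measurePreserving_glue_zeroExtend J).measurable
  refine Measure.ext_of_lintegral _ fun φ hφ => ?_
  have hφr : Measurable fun x : Fin k → ℝ => φ (J.restrict x) :=
    hφ.comp (Finset.measurable_restrict J)
  have hφfst : Measurable fun p : (J → ℝ) × ({i : Fin k // i ∉ J} → ℝ) => φ p.1 :=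
    hφ.comp measurable_fst
  calc ∫⁻ u, φ u ∂(volume.withDensity g).map J.restrict
      = ∫⁻ x, g x * φ (J.restrict x) := by
        rw [lintegral_map hφ (Finset.measurable_restrict J)]
        exact lintegral_withDensity_eq_lintegral_mul _ hg hφr
    _ = ∫⁻ p : (J → ℝ) × ({i : Fin k // i ∉ J} → ℝ),
          g (glue J (zeroExtend J p.1) p.2) * φ p.1 := by
        rw [← (measurePreserving_glue_zeroExtend J).lintegral_comp (hg.fun_mul hφr)]
        simp only [restrict_glue_zeroExtend]
    _ = ∫⁻ u, lmargDen g J (zeroExtend J u) * φ u := by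
        rw [Measure.volume_eq_prod, lintegral_prod _ (hg'.fun_mul hφfst).aemeasurable]
        refine lintegral_congr fun u => ?_
        exact lintegral_mul_const (φ u) (hg'.comp measurable_prodMk_left)
    _ = ∫⁻ u, φ u ∂volume.withDensity fun u => lmargDen g J (zeroExtend J u) :=
        (lintegral_withDensity_eq_lintegral_mul _
          ((measurable_lmargDen hg).comp measurable_zeroExtend) hφ).symm

lemma lintegral_lmargDen_zeroExtend (hg : Measurable g) :
    ∫⁻ u, lmargDen g J (zeroExtend J u) = ∫⁻ x, g x := by
  have hmass := congrArg (· Set.univ) (map_restrict_withDensity (J := J) hg)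
  simpa [Measure.map_apply (Finset.measurable_restrict J)] using hmass.symm

lemma ae_lmargDen_lt_top (hg : Measurable g) (hfin : ∫⁻ x, g x ≠ ∞) :
    ∀ᵐ x, lmargDen g J x < ∞ := by
  have hJ : ∀ᵐ u : J → ℝ, lmargDen g J (zeroExtend J u) < ∞ :=
    ae_lt_top ((measurable_lmargDen hg).comp measurable_zeroExtend)
      ((lintegral_lmargDen_zeroExtend hg).trans_ne hfin)
  rw [← (measurePreserving_glue_zeroExtend J).map_eq,
    ae_map_iff (measurePreserving_glue_zeroExtend J).measurable.aemeasurable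
      (measurableSet_lt (measurable_lmargDen hg) measurable_const)]
  filter_upwards [Measure.quasiMeasurePreserving_fst.ae hJ] with p hp
  rwa [← lmargDen_zeroExtend_restrict, restrict_glue_zeroExtend]

variable {f : (Fin k → ℝ) → ℝ}

lemma margDen_eq_toReal_lmargDen (hfm : Measurable f) (hf0 : ∀ x, 0 ≤ f x) (x : Fin k → ℝ) :
    margDen f J x = (lmargDen (fun z => ENNReal.ofReal (f z)) J x).toReal :=
  integral_eq_lintegral_of_nonneg_ae (ae_of_all _ fun _ => hf0 _)
    (hfm.comp (measurable_glue.comp measurable_prodMk_left)).aestronglyMeasurable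

lemma ofReal_integral_margDen_add (hfm : Measurable f) (hf0 : ∀ x, 0 ≤ f x)
    {ν : Measure (Fin k → ℝ)} {x : Fin k → ℝ}
    (hfin : ∫⁻ τ, lmargDen (fun z => ENNReal.ofReal (f z)) J (x + τ) ∂ν ≠ ∞) :
    ENNReal.ofReal (∫ τ, margDen f J (x + τ) ∂ν) =
      ∫⁻ τ, lmargDen (fun z => ENNReal.ofReal (f z)) J (x + τ) ∂ν := by
  have hm : Measurable fun τ => lmargDen (fun z => ENNReal.ofReal (f z)) J (x + τ) :=
    (measurable_lmargDen hfm.ennreal_ofReal).comp (measurable_const_add x)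
  simp only [margDen_eq_toReal_lmargDen hfm hf0]
  rw [integral_toReal hm.aemeasurable (ae_lt_top hm hfin), ENNReal.ofReal_toReal hfin]

end MarginalDensity

section AdditiveNoise

variable {k : ℕ} {J : Finset (Fin k)} {Ω : Type*} [MeasurableSpace Ω] {P : Measure Ω}
  [IsFiniteMeasure P] {X N : Ω → Fin k → ℝ} {ν : Measure (Fin k → ℝ)} [SFinite ν]

lemma map_restrict_add_eq_withDensity_lmargDen {g : (Fin k → ℝ) → ℝ≥0∞} (hg : Measurable g)
    (hXm : AEMeasurable X P) (hNm : AEMeasurable N P) (hindep : IndepFun X N P)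
    (hX : P.map X = volume.withDensity g) (hN : P.map N = ν.map Neg.neg) :
    P.map (J.restrict ∘ (X + N)) =
      volume.withDensity fun u => ∫⁻ τ, lmargDen g J (zeroExtend J u + τ) ∂ν := by
  have hmix : Measurable fun x => ∫⁻ τ, g (x + τ) ∂ν :=
    (hg.comp measurable_add).lintegral_prod_right'
  rw [← AEMeasurable.map_map_of_aemeasurable (Finset.measurable_restrict J).aemeasurable
      (hXm.add hNm), hindep.map_add_eq_map_conv_map₀ hXm hNm, hX, hN, withDensity_conv_map_neg hg,
    map_restrict_withDensity hmix]
  simp only [lmargDen_lintegral_add hg]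

lemma map_restrict_add_eq_withDensity_margDen {f : (Fin k → ℝ) → ℝ} (hfm : Measurable f)
    (hf0 : ∀ x, 0 ≤ f x) (hXm : AEMeasurable X P) (hNm : AEMeasurable N P)
    (hindep : IndepFun X N P)
    (hX : P.map X = volume.withDensity fun x => ENNReal.ofReal (f x))
    (hN : P.map N = ν.map Neg.neg) :
    P.map (J.restrict ∘ (X + N)) = volume.withDensity fun u =>
      ENNReal.ofReal (∫ τ, margDen f J (zeroExtend J u + τ) ∂ν) := by
  have hlaw := map_restrict_add_eq_withDensity_lmargDen (J := J) hfm.ennreal_ofReal hXm hNm hindep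
    hX hN
  have hmeas : Measurable fun u : J → ℝ =>
      ∫⁻ τ, lmargDen (fun z => ENNReal.ofReal (f z)) J (zeroExtend J u + τ) ∂ν :=
    ((measurable_lmargDen hfm.ennreal_ofReal).comp
      ((measurable_zeroExtend.comp measurable_fst).add measurable_snd)).lintegral_prod_right'
  have hmass : ∫⁻ u : J → ℝ,
      ∫⁻ τ, lmargDen (fun z => ENNReal.ofReal (f z)) J (zeroExtend J u + τ) ∂ν ≠ ∞ :=
    lintegral_ne_top_of_eq_withDensity hlaw
  rw [hlaw]
  refine withDensity_congr_ae ?_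
  filter_upwards [ae_lt_top hmeas hmass] with u hu
  exact (ofReal_integral_margDen_add hfm hf0 hu.ne).symm

end AdditiveNoise

section ConditionalCDF

variable {k : ℕ} {I J : Finset (Fin k)} {f : (Fin k → ℝ) → ℝ} {x : Fin k → ℝ}

/-- The domain of integration of `condCDFNum`: the subvectors outside `J` whose coordinates in `I`
are bounded by those of `x`. -/
def lowerOrthant (I J : Finset (Fin k)) (x : Fin k → ℝ) : Set ({i : Fin k // i ∉ J} → ℝ) :=
  {y | ∀ i : {i : Fin k // i ∉ J}, i.1 ∈ I → y i ≤ x i.1}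

lemma measurableSet_lowerOrthant : MeasurableSet (lowerOrthant I J x) := by
  simp only [lowerOrthant, Set.ofPred_forall]
  exact .iInter fun i => .iInter fun _ => measurableSet_le (measurable_pi_apply i) measurable_const

lemma condCDFNum_eq_setIntegral :
    condCDFNum f I J x = ∫ y in lowerOrthant I J x, f (glue J x y) := by
  rw [← integral_indicator measurableSet_lowerOrthant]
  exact integral_congr_ae (ae_of_all _ fun _ => if_congr Iff.rfl rfl rfl)

lemma margDen_eq_condCDFNum_empty : margDen f J x = condCDFNum f ∅ J x := by
  simp [margDen, condCDFNum]

lemma condCDFNum_nonneg (hf0 : ∀ x, 0 ≤ f x) : 0 ≤ condCDFNum f I J x := by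
  rw [condCDFNum_eq_setIntegral]
  exact integral_nonneg fun _ => hf0 _

lemma condCDFNum_le_margDen (hf0 : ∀ x, 0 ≤ f x) (hint : Integrable fun y => f (glue J x y)) :
    condCDFNum f I J x ≤ margDen f J x := by
  rw [condCDFNum_eq_setIntegral]
  exact setIntegral_le_integral hint (ae_of_all _ fun _ => hf0 _)

lemma condCDFd_mul_margDen (hf0 : ∀ x, 0 ≤ f x) (hint : Integrable fun y => f (glue J x y)) :
    condCDFd f I J x * margDen f J x = condCDFNum f I J x :=
  div_mul_cancel_of_imp fun hzero =>
    le_antisymm ((condCDFNum_le_margDen hf0 hint).trans_eq hzero) (condCDFNum_nonneg hf0)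

lemma condCDFNum_const_mul (c : ℝ) :
    condCDFNum (fun z => c * f z) I J x = c * condCDFNum f I J x := by
  simp only [condCDFNum_eq_setIntegral, integral_const_mul]

lemma condCDFd_const_mul {c : ℝ} (hc : c ≠ 0) :
    condCDFd (fun z => c * f z) I J x = condCDFd f I J x := by
  simp only [condCDFd, margDen_eq_condCDFNum_empty, condCDFNum_const_mul, mul_div_mul_left _ _ hc]

lemma condCDFNum_comp_add (τ : Fin k → ℝ) :
    condCDFNum (fun z => f (z + τ)) I J x = condCDFNum f I J (x + τ) := by
  refine Eq.trans ?_ (integral_add_right_eq_self _ fun i : {i : Fin k // i ∉ J} => τ i.1)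
  simp only [condCDFNum, glue_add, Pi.add_apply, add_le_add_iff_right]

lemma integrable_glue_of_lmargDen_lt_top (hfm : Measurable f) (hf0 : ∀ x, 0 ≤ f x)
    (hfin : lmargDen (fun z => ENNReal.ofReal (f z)) J x < ∞) :
    Integrable fun y => f (glue J x y) :=
  ⟨(hfm.comp (measurable_glue.comp measurable_prodMk_left)).aestronglyMeasurable,
    (hasFiniteIntegral_iff_ofReal (ae_of_all _ fun _ => hf0 _)).2 hfin⟩

variable {ν : Measure (Fin k → ℝ)}

lemma ae_lmargDen_add_lt_top {g : (Fin k → ℝ) → ℝ≥0∞} (hg : Measurable g)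
    (hfin : ∫⁻ x, g x ≠ ∞) (hν : ν ≪ volume) : ∀ᵐ τ ∂ν, lmargDen g J (x + τ) < ∞ :=
  hν.ae_le (eventually_add_left_iff volume x |>.2 (ae_lmargDen_lt_top hg hfin))

lemma lintegral_lmargDen_add_ne_top (hfm : Measurable f) (hf0 : ∀ x, 0 ≤ f x)
    (hfin : ∫⁻ x, ENNReal.ofReal (f x) ≠ ∞) (hν : ν ≪ volume)
    (hne : ∫ τ, margDen f J (x + τ) ∂ν ≠ 0) :
    ∫⁻ τ, lmargDen (fun z => ENNReal.ofReal (f z)) J (x + τ) ∂ν ≠ ∞ := by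
  have hint : Integrable (fun τ => margDen f J (x + τ)) ν := .of_integral_ne_zero hne
  simp only [margDen_eq_toReal_lmargDen hfm hf0] at hint
  have hlt := ae_lmargDen_add_lt_top (J := J) (x := x) hfm.ennreal_ofReal hfin hν
  rw [← lintegral_congr_ae (ofReal_toReal_ae_eq hlt)]
  exact hint.lintegral_lt_top.ne

variable [SFinite ν]

lemma condCDFNum_integral_add
    (hint : Integrable (fun p : ({i : Fin k // i ∉ J} → ℝ) × (Fin k → ℝ) =>
      f (glue J x p.1 + p.2)) (volume.prod ν)) :
    condCDFNum (fun z => ∫ τ, f (z + τ) ∂ν) I J x = ∫ τ, condCDFNum f I J (x + τ) ∂ν := by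
  have hint' : Integrable (fun p : ({i : Fin k // i ∉ J} → ℝ) × (Fin k → ℝ) =>
      f (glue J x p.1 + p.2)) ((volume.restrict (lowerOrthant I J x)).prod ν) :=
    hint.mono_measure (Measure.prod_mono Measure.restrict_le_self le_rfl)
  calc condCDFNum (fun z => ∫ τ, f (z + τ) ∂ν) I J x
      = ∫ y in lowerOrthant I J x, ∫ τ, f (glue J x y + τ) ∂ν := condCDFNum_eq_setIntegral
    _ = ∫ τ, (∫ y in lowerOrthant I J x, f (glue J x y + τ)) ∂ν := integral_integral_swap hint'
    _ = ∫ τ, condCDFNum f I J (x + τ) ∂ν := by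
        refine integral_congr_ae (ae_of_all _ fun τ => ?_)
        exact (condCDFNum_comp_add τ ▸ condCDFNum_eq_setIntegral).symm

lemma integrable_glue_add_of_lintegral_lmargDen_ne_top (hfm : Measurable f) (hf0 : ∀ x, 0 ≤ f x)
    (hfin : ∫⁻ τ, lmargDen (fun z => ENNReal.ofReal (f z)) J (x + τ) ∂ν ≠ ∞) :
    Integrable (fun p : ({i : Fin k // i ∉ J} → ℝ) × (Fin k → ℝ) => f (glue J x p.1 + p.2))
      (volume.prod ν) := by
  have hmeas : Measurable fun p : ({i : Fin k // i ∉ J} → ℝ) × (Fin k → ℝ) =>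
      f (glue J x p.1 + p.2) := hfm.comp (measurable_glue_add x)
  refine ⟨hmeas.aestronglyMeasurable, ?_⟩
  rw [hasFiniteIntegral_iff_ofReal (ae_of_all _ fun _ => hf0 _),
    lintegral_prod _ hmeas.ennreal_ofReal.aemeasurable]
  exact ((lmargDen_lintegral_add hfm.ennreal_ofReal ν x).trans_ne hfin).lt_top

lemma condCDFd_integral_add (hfm : Measurable f) (hf0 : ∀ x, 0 ≤ f x)
    (hfin : ∫⁻ x, ENNReal.ofReal (f x) ≠ ∞) (hν : ν ≪ volume)
    (hne : ∫ τ, margDen f J (x + τ) ∂ν ≠ 0) :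
    condCDFd (fun z => ∫ τ, f (z + τ) ∂ν) I J x =
      (∫ τ, condCDFd f I J (x + τ) * margDen f J (x + τ) ∂ν) / ∫ τ, margDen f J (x + τ) ∂ν := by
  have hint := integrable_glue_add_of_lintegral_lmargDen_ne_top hfm hf0
    (lintegral_lmargDen_add_ne_top hfm hf0 hfin hν hne)
  have hnum : ∫ τ, condCDFd f I J (x + τ) * margDen f J (x + τ) ∂ν =
      ∫ τ, condCDFNum f I J (x + τ) ∂ν := by
    refine integral_congr_ae ?_
    filter_upwards [ae_lmargDen_add_lt_top hfm.ennreal_ofReal hfin hν] with τ hτ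
    exact condCDFd_mul_margDen hf0 (integrable_glue_of_lmargDen_lt_top hfm hf0 hτ)
  rw [hnum, condCDFd, margDen_eq_condCDFNum_empty, condCDFNum_integral_add hint,
    condCDFNum_integral_add hint]
  simp only [margDen_eq_condCDFNum_empty]

end ConditionalCDF

theorem dithered_quantizer_conditional_distribution_general {Ω : Type*} [MeasurableSpace Ω]
    (P : Measure Ω) [IsProbabilityMeasure P] {k : ℕ} (X N : Ω → (Fin k → ℝ))
    (hXm : AEMeasurable X P) (hNm : AEMeasurable N P)
    (f : (Fin k → ℝ) → ℝ) (hfm : Measurable f) (hf0 : ∀ x, 0 ≤ f x)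
    (hX : P.map X = volume.withDensity (fun x => ENNReal.ofReal (f x)))
    (P₀ : Set (Fin k → ℝ))
    (hN : P.map N = (volume P₀)⁻¹ • volume.restrict (-P₀))
    (hindep : IndepFun X N P) (I J : Finset (Fin k)) :
    P.map (J.restrict ∘ (X + N)) = volume.withDensity (fun u => ENNReal.ofReal
        ((volume P₀).toReal⁻¹ * ∫ τ in P₀, margDen f J (zeroExtend J u + τ))) ∧
      ∀ xh : Fin k → ℝ, (∫ τ in P₀, margDen f J (xh + τ)) ≠ 0 →
        condCDFd (fun x => (volume P₀).toReal⁻¹ * ∫ τ in P₀, f (x + τ)) I J xh =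
          (∫ τ in P₀, condCDFd f I J (xh + τ) * margDen f J (xh + τ)) /
            (∫ τ in P₀, margDen f J (xh + τ)) := by
  have hV : (volume P₀)⁻¹ * volume P₀ = 1 := by
    have := Measure.isProbabilityMeasure_map hNm
    simpa [hN] using measure_univ (μ := P.map N)
  have hV0 : volume P₀ ≠ 0 := fun h0 => by simp [h0] at hV
  have hVtop : volume P₀ ≠ ∞ := fun htop => by simp [htop] at hV
  have hfin : ∫⁻ x, ENNReal.ofReal (f x) ≠ ∞ := lintegral_ne_top_of_eq_withDensity hX
  refine ⟨?_, fun xh hne => ?_⟩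
  · have : IsProbabilityMeasure ((volume P₀)⁻¹ • volume.restrict P₀) := ⟨by simpa using hV⟩
    have hN' : P.map N = ((volume P₀)⁻¹ • volume.restrict P₀).map Neg.neg := by
      rw [Measure.map_smul, map_neg_restrict, hN]
    rw [map_restrict_add_eq_withDensity_margDen hfm hf0 hXm hNm hindep hX hN']
    simp only [integral_smul_measure, ENNReal.toReal_inv, smul_eq_mul]
  · rw [condCDFd_const_mul (inv_ne_zero (ENNReal.toReal_ne_zero.2 ⟨hV0, hVtop⟩)),
      condCDFd_integral_add hfm hf0 hfin Measure.restrict_le_self.absolutelyContinuous hne]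

/-- conditional distribution of a dithered quantizer output.  Let `X` have density
`f` on `ℝ^k`, let `N` be uniform over `−P₀` and independent of `X`, and `X̂ = X + N`.  Then
(i) the subvector `X̂_J` has density `x̂_J ↦ (1/V) ∫_{P₀} f_{X_J}(x̂_J + τ_J) dτ`, and (ii) the
conditional c.d.f. of `X̂_I` given `X̂_J` equals
`(∫_{P₀} F_{X_I|X_J}(x̂_I + τ_I | x̂_J + τ_J) f_{X_J}(x̂_J + τ_J) dτ) / (∫_{P₀} f_{X_J}(x̂_J + τ_J) dτ)`
whenever the denominator is nonzero. -/
theorem dithered_quantizer_conditional_distribution {Ω : Type*} [MeasurableSpace Ω]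
    (P : Measure Ω) [IsProbabilityMeasure P] {k : ℕ} (X N : Ω → (Fin k → ℝ))
    (hXm : Measurable X) (hNm : Measurable N)
    (f : (Fin k → ℝ) → ℝ) (hfm : Measurable f) (hf0 : ∀ x, 0 ≤ f x)
    (hX : P.map X = volume.withDensity (fun x => ENNReal.ofReal (f x)))
    (P₀ : Set (Fin k → ℝ)) (hP₀m : MeasurableSet P₀) (hP₀b : Bornology.IsBounded P₀)
    (hV : 0 < volume P₀)
    (hN : P.map N = (volume P₀)⁻¹ • volume.restrict (-P₀))
    (hindep : IndepFun X N P)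
    (I J : Finset (Fin k)) (hIJ : Disjoint I J) :
    P.map (fun ω => fun j : {i : Fin k // i ∈ J} => (X ω + N ω) j.1) =
        volume.withDensity (fun xJ : {i : Fin k // i ∈ J} → ℝ =>
          ENNReal.ofReal ((volume P₀).toReal⁻¹ *
            ∫ τ in P₀, margDen f J ((fun i => if h : i ∈ J then xJ ⟨i, h⟩ else 0) + τ))) ∧
      ∀ xh : Fin k → ℝ, (∫ τ in P₀, margDen f J (xh + τ)) ≠ 0 →
        condCDFd (fun x => (volume P₀).toReal⁻¹ * ∫ τ in P₀, f (x + τ)) I J xh =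
          (∫ τ in P₀, condCDFd f I J (xh + τ) * margDen f J (xh + τ)) /
            (∫ τ in P₀, margDen f J (xh + τ)) := by
  exact dithered_quantizer_conditional_distribution_general P X N hXm.aemeasurable
    hNm.aemeasurable f hfm hf0 hX P₀ hN hindep I J
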